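/- arXiv:1202.1660 — 9 statements merged into one kernel-verified Lean document; each statement's English description precedes it below -/
import Mathlib

section
/- Let n ≥ r ≥ 1, let κ be a real number with κ ≠ -1, and let X, V be real n×r matrices satisfying XᵀX = I_r and XᵀV + VᵀX = 0. Define P = V - ((1+2κ)/(2+2κ)) X XᵀV. Then XᵀP + PᵀX = 0 and V = P - (1+2κ) X PᵀX. (Forward direction of the Legendre transformation for the Jensen metric ds²_κ on the Stiefel variety.) -/
open Matrix

/-!
Left multiplication by `Xᴴ` turns the Legendre map `V ↦ P = V - c X XᴴV` into multiplication by the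
scalar `1 - c`, so `XᴴP = (1 - c) XᴴV` inherits skewness from `XᴴV`. Hence
`V = P + c X XᴴV` is `P - (1 + 2κ) X PᴴX` as soon as `c = (1 + 2κ)(1 - c)`, which is the equation
solved by `c = (1 + 2κ) / (2 + 2κ)`.
-/

section StarAlgebra

variable {n r K A : Type*} [Fintype n] [Fintype r] [DecidableEq r] [CommRing K] [Ring A]
  [StarRing A] [Algebra K A] {X : Matrix n r A}

theorem conjTranspose_mul_sub_smul_mul_mul (hX : Xᴴ * X = 1) (V : Matrix n r A) (c : K) :
    Xᴴ * (V - c • (X * (Xᴴ * V))) = (1 - c) • (Xᴴ * V) := by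
  rw [Matrix.mul_sub, Matrix.mul_smul, ← Matrix.mul_assoc Xᴴ X, hX, Matrix.one_mul, sub_smul,
    one_smul]

variable [Star K] [TrivialStar K] [StarModule K A] {V : Matrix n r A}

theorem conjTranspose_sub_smul_mul_mul_mul (hX : Xᴴ * X = 1) (hV : Xᴴ * V + Vᴴ * X = 0) (c : K) :
    (V - c • (X * (Xᴴ * V)))ᴴ * X = -((1 - c) • (Xᴴ * V)) :=
  calc (V - c • (X * (Xᴴ * V)))ᴴ * X
    _ = (Xᴴ * (V - c • (X * (Xᴴ * V))))ᴴ := by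
      rw [conjTranspose_mul, conjTranspose_conjTranspose]
    _ = (1 - c) • (Vᴴ * X) := by
      rw [conjTranspose_mul_sub_smul_mul_mul hX, conjTranspose_smul, star_trivial,
        conjTranspose_mul, conjTranspose_conjTranspose]
    _ = -((1 - c) • (Xᴴ * V)) := by
      rw [eq_neg_of_add_eq_zero_right hV, smul_neg]

/-- For `K = ℝ`, the cases `A = ℝ, ℂ, ℍ` are the real, complex and quaternionic Stiefel
manifolds. -/
theorem stiefel_legendre_forward_general {κ c : K} (hc : c * (2 + 2 * κ) = 1 + 2 * κ)
    {P : Matrix n r A} (hX : Xᴴ * X = 1) (hV : Xᴴ * V + Vᴴ * X = 0)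
    (hP : P = V - c • (X * (Xᴴ * V))) :
    Xᴴ * P + Pᴴ * X = 0 ∧ V = P - (1 + 2 * κ) • (X * (Pᴴ * X)) := by
  have hXP : Xᴴ * P = (1 - c) • (Xᴴ * V) := hP ▸ conjTranspose_mul_sub_smul_mul_mul hX V c
  have hPX : Pᴴ * X = -((1 - c) • (Xᴴ * V)) := hP ▸ conjTranspose_sub_smul_mul_mul_mul hX hV c
  have hcκ : (1 + 2 * κ) * (1 - c) = c := by linear_combination -hc
  refine ⟨by rw [hXP, hPX, add_neg_cancel], ?_⟩
  calc V = P + c • (X * (Xᴴ * V)) := by rw [hP, sub_add_cancel]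
    _ = P - (1 + 2 * κ) • (X * (Pᴴ * X)) := by
      rw [hPX, Matrix.mul_neg, Matrix.mul_smul, smul_neg, smul_smul, hcκ, sub_neg_eq_add]

end StarAlgebra

/-- Forward direction of the Legendre transformation for the
Jensen metric `ds²_κ` on the Stiefel variety `V(n,r)`. -/
theorem stiefel_legendre_forward (n r : ℕ) (hr : 1 ≤ r) (hnr : r ≤ n)
    (κ : ℝ) (hκ : κ ≠ -1)
    (X V P : Matrix (Fin n) (Fin r) ℝ)
    (hX : Xᵀ * X = 1)
    (hV : Xᵀ * V + Vᵀ * X = 0)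
    (hP : P = V - ((1 + 2 * κ) / (2 + 2 * κ)) • (X * (Xᵀ * V))) :
    Xᵀ * P + Pᵀ * X = 0 ∧ V = P - (1 + 2 * κ) • (X * (Pᵀ * X)) := by
  have hκ' : 2 + 2 * κ ≠ 0 := fun h ↦ hκ (by linarith)
  simp only [← conjTranspose_eq_transpose_of_trivial] at hX hV hP ⊢
  exact stiefel_legendre_forward_general (div_mul_cancel₀ _ hκ') hX hV hP
end

section
/- Let n ≥ r ≥ 1, let κ be a real number with κ ≠ -1, and let X, P be real n×r matrices satisfying XᵀX = I_r and XᵀP + PᵀX = 0. Define V = P - (1+2κ) X PᵀX. Then XᵀV + VᵀX = 0 and P = V - ((1+2κ)/(2+2κ)) X XᵀV. (Inverse direction of the Legendre transformation for the Jensen metric ds²_κ on the Stiefel variety.) -/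
open Matrix

/-! For `V = P - (1 + 2κ) X PᵀX`, the relations `XᵀX = 1` and `PᵀX = -XᵀP` give
`XᵀV = (2 + 2κ) XᵀP`. Hence `XᵀV` is skew together with `XᵀP`, and for `κ ≠ -1` the correction
`V - P = (1 + 2κ) XXᵀP` can be recovered from `XᵀV`. -/

section CommRing

variable {m n R : Type*} [Fintype m] [CommRing R] {X P : Matrix m n R}

/-- The equation `XᵀV + VᵀX = 0` of the tangent space at `X` to the Stiefel variety. It also
describes the fibre at `X` of the cotangent bundle, whose elements are realized by matrices of the
same shape. The condition `XᵀX = 1` on the base point is kept separate. -/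
def IsStiefelTangent (X V : Matrix m n R) : Prop :=
  Xᵀ * V + Vᵀ * X = 0

/-- The velocity that the Legendre transformation of the Jensen metric `ds²_κ` associates with
the momentum `P` at `X`. -/
def jensenVelocity [Fintype n] (κ : R) (X P : Matrix m n R) : Matrix m n R :=
  P - (1 + 2 * κ) • (X * (Pᵀ * X))

theorem IsStiefelTangent.transpose_mul_eq_neg (hP : IsStiefelTangent X P) :
    Pᵀ * X = -(Xᵀ * P) :=
  eq_neg_of_add_eq_zero_right hP

theorem IsStiefelTangent.of_transpose_mul_eq_smul {V : Matrix m n R} {c : R}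
    (hP : IsStiefelTangent X P) (hV : Xᵀ * V = c • (Xᵀ * P)) : IsStiefelTangent X V := by
  have hV' : Vᵀ * X = c • (Pᵀ * X) := by
    simpa only [transpose_mul, transpose_smul, transpose_transpose] using congrArg transpose hV
  rw [IsStiefelTangent, hV, hV', ← smul_add, hP, smul_zero]

theorem IsStiefelTangent.jensenVelocity_eq_add [Fintype n] (hP : IsStiefelTangent X P) (κ : R) :
    jensenVelocity κ X P = P + (1 + 2 * κ) • (X * (Xᵀ * P)) := by
  rw [jensenVelocity, hP.transpose_mul_eq_neg, Matrix.mul_neg, smul_neg, sub_neg_eq_add]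

variable [Fintype n] [DecidableEq n]

theorem IsStiefelTangent.transpose_mul_jensenVelocity (hP : IsStiefelTangent X P)
    (hX : Xᵀ * X = 1) (κ : R) :
    Xᵀ * jensenVelocity κ X P = (2 + 2 * κ) • (Xᵀ * P) :=
  calc
    Xᵀ * jensenVelocity κ X P = Xᵀ * P + (1 + 2 * κ) • (Xᵀ * X * (Xᵀ * P)) := by
      rw [hP.jensenVelocity_eq_add, Matrix.mul_add, Matrix.mul_smul, Matrix.mul_assoc]
    _ = Xᵀ * P + (1 + 2 * κ) • (Xᵀ * P) := by rw [hX, Matrix.one_mul]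
    _ = (2 + 2 * κ) • (Xᵀ * P) := by module

theorem isStiefelTangent_jensenVelocity (hP : IsStiefelTangent X P) (hX : Xᵀ * X = 1) (κ : R) :
    IsStiefelTangent X (jensenVelocity κ X P) :=
  hP.of_transpose_mul_eq_smul (hP.transpose_mul_jensenVelocity hX κ)

end CommRing

section Field

variable {m n K : Type*} [Fintype m] [Fintype n] [Field K]

/-- The momentum that the Legendre transformation of the Jensen metric `ds²_κ` associates with
the velocity `V` at `X`. Division by zero makes it the identity in `V` when `2 + 2 * κ = 0`. -/
def jensenMomentum (κ : K) (X V : Matrix m n K) : Matrix m n K :=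
  V - ((1 + 2 * κ) / (2 + 2 * κ)) • (X * (Xᵀ * V))

variable [DecidableEq n] {X P : Matrix m n K} {κ : K}

theorem IsStiefelTangent.jensenMomentum_jensenVelocity (hP : IsStiefelTangent X P)
    (hX : Xᵀ * X = 1) (hκ : 2 + 2 * κ ≠ 0) :
    jensenMomentum κ X (jensenVelocity κ X P) = P := by
  rw [jensenMomentum, hP.transpose_mul_jensenVelocity hX, Matrix.mul_smul, smul_smul,
    div_mul_cancel₀ _ hκ, hP.jensenVelocity_eq_add, add_sub_cancel_right]

theorem stiefel_legendre_inverse_general (hκ : 2 + 2 * κ ≠ 0) (hX : Xᵀ * X = 1)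
    (hP : IsStiefelTangent X P) :
    IsStiefelTangent X (jensenVelocity κ X P) ∧
      P = jensenMomentum κ X (jensenVelocity κ X P) :=
  ⟨isStiefelTangent_jensenVelocity hP hX κ, (hP.jensenMomentum_jensenVelocity hX hκ).symm⟩

end Field

/-- Inverse direction of the Legendre transformation for the
Jensen metric `ds²_κ` on the Stiefel variety `V(n,r)`. -/
theorem stiefel_legendre_inverse (n r : ℕ) (hr : 1 ≤ r) (hnr : r ≤ n)
    (κ : ℝ) (hκ : κ ≠ -1)
    (X P V : Matrix (Fin n) (Fin r) ℝ)
    (hX : Xᵀ * X = 1)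
    (hP : Xᵀ * P + Pᵀ * X = 0)
    (hV : V = P - (1 + 2 * κ) • (X * (Pᵀ * X))) :
    Xᵀ * V + Vᵀ * X = 0 ∧ P = V - ((1 + 2 * κ) / (2 + 2 * κ)) • (X * (Xᵀ * V)) := by
  subst hV
  exact stiefel_legendre_inverse_general (fun h => hκ (by linarith)) hX hP
end

section
/- Let Γ be a constant real n×r matrix and κ ∈ ℝ. Suppose X, P : ℝ → M_{n,r}(ℝ) are differentiable curves which at time t satisfy the constraints XᵀX = I_r, XᵀP + PᵀX = 0, and the pendulum equations X' = P - (1+2κ)XPᵀX, P' = (1+2κ)PXᵀP - Γ + XΛ with Λ = ½(-2PᵀP + XᵀΓ + ΓᵀX). Then, setting Φ = PXᵀ - XPᵀ and Ψ = XᵀP - PᵀX, at time t one has X' = ΦX + κXΨ, Φ' = XΓᵀ - ΓXᵀ, and Ψ' = ΓᵀX - XᵀΓ. -/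
/-!
Both momenta are of the form `M - Mᵀ`, with `M = PXᵀ` for `Φ` and `M = XᵀP` for `Ψ`. Along the flow
the terms of `M'` that carry the metric parameter cancel, which leaves a symmetric matrix minus
`ΓXᵀ`, respectively `XᵀΓ`. Antisymmetrizing kills the symmetric part, including the contribution of
the symmetric multiplier `Λ`.
-/

open Matrix

/-- Entrywise derivative of a matrix-valued curve. -/
def HasMatDerivAt {m k : Type*} {E : Type*} [NormedAddCommGroup E] [NormedSpace ℝ E]
    (F : ℝ → Matrix m k E) (F' : Matrix m k E) (t : ℝ) : Prop :=
  ∀ i j, HasDerivAt (fun s => F s i j) (F' i j) t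

namespace HasMatDerivAt

variable {m k l : Type*} {t : ℝ}

theorem mul [Fintype k] {𝔸 : Type*} [NormedRing 𝔸] [NormedAlgebra ℝ 𝔸]
    {F : ℝ → Matrix m k 𝔸} {F' : Matrix m k 𝔸} {G : ℝ → Matrix k l 𝔸} {G' : Matrix k l 𝔸}
    (hF : HasMatDerivAt F F' t) (hG : HasMatDerivAt G G' t) :
    HasMatDerivAt (fun s => F s * G s) (F' * G t + F t * G') t := by
  intro i j
  simp only [Matrix.mul_apply, Matrix.add_apply, ← Finset.sum_add_distrib]
  exact HasDerivAt.fun_sum fun x _ => (hF i x).mul (hG x j)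

variable {E : Type*} [NormedAddCommGroup E] [NormedSpace ℝ E]

theorem sub {F G : ℝ → Matrix m k E} {F' G' : Matrix m k E}
    (hF : HasMatDerivAt F F' t) (hG : HasMatDerivAt G G' t) :
    HasMatDerivAt (fun s => F s - G s) (F' - G') t :=
  fun i j => (hF i j).sub (hG i j)

theorem transpose {F : ℝ → Matrix m k E} {F' : Matrix m k E} (hF : HasMatDerivAt F F' t) :
    HasMatDerivAt (fun s => (F s)ᵀ) F'ᵀ t :=
  fun i j => hF j i

theorem sub_transpose_of_isSymm {F : ℝ → Matrix m m E} {S M : Matrix m m E}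
    (hS : S.IsSymm) (hF : HasMatDerivAt F (S - M) t) :
    HasMatDerivAt (fun s => F s - (F s)ᵀ) (Mᵀ - M) t := by
  have symm_part_cancels : S - M - (S - M)ᵀ = Mᵀ - M := by
    rw [transpose_sub, hS.eq, sub_sub_sub_cancel_left]
  exact symm_part_cancels ▸ hF.sub hF.transpose

end HasMatDerivAt

-- `Matrix.isSymm_mul_transpose_self` is stated for square matrices only.
theorem isSymm_rect_mul_transpose_self {m k R : Type*} [Fintype k] [NonUnitalCommSemiring R]
    (A : Matrix m k R) : (A * Aᵀ).IsSymm := by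
  rw [IsSymm, transpose_mul, transpose_transpose]

theorem isSymm_mul_mul_transpose {m k R : Type*} [Fintype k] [NonUnitalCommSemiring R]
    {S : Matrix k k R} (hS : S.IsSymm) (A : Matrix m k R) : (A * S * Aᵀ).IsSymm := by
  rw [IsSymm, transpose_mul, transpose_mul, transpose_transpose, hS.eq, Matrix.mul_assoc]

section PendulumAlgebra

theorem pendulum_multiplier_isSymm {m k R : Type*} [Fintype m] [CommSemiring R]
    (a b : R) (X P Γ : Matrix m k R) : (a • (b • (Pᵀ * P) + Xᵀ * Γ + Γᵀ * X)).IsSymm := by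
  have potential_symm : (Xᵀ * Γ + Γᵀ * X).IsSymm := by
    simpa only [transpose_mul, transpose_transpose] using isSymm_add_transpose_self (Xᵀ * Γ)
  have kinetic_symm : (b • (Pᵀ * P)).IsSymm := (isSymm_rect_mul_transpose_self Pᵀ).smul b
  rw [add_assoc]
  exact (kinetic_symm.add potential_symm).smul a

variable {m k R : Type*} [Fintype m] [Fintype k] [CommRing R]

theorem pendulum_velocity_eq_momentum_action [DecidableEq k] {X P : Matrix m k R} (κ : R)
    (hX : Xᵀ * X = 1) (hXP : Xᵀ * P + Pᵀ * X = 0) :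
    P - (1 + 2 * κ) • (X * (Pᵀ * X)) =
      (P * Xᵀ - X * Pᵀ) * X + κ • (X * (Xᵀ * P - Pᵀ * X)) := by
  have left_action : (P * Xᵀ - X * Pᵀ) * X = P - X * (Pᵀ * X) := by
    rw [Matrix.sub_mul, Matrix.mul_assoc, hX, Matrix.mul_one, Matrix.mul_assoc]
  have right_action : X * (Xᵀ * P - Pᵀ * X) = -(2 : R) • (X * (Pᵀ * X)) := by
    rw [eq_neg_of_add_eq_zero_left hXP, Matrix.mul_sub, Matrix.mul_neg]
    module
  rw [left_action, right_action]
  module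

theorem pendulum_mul_transpose_rate (c : R) (X P Γ : Matrix m k R) (Λ : Matrix k k R) :
    (c • (P * (Xᵀ * P)) - Γ + X * Λ) * Xᵀ + P * (P - c • (X * (Pᵀ * X)))ᵀ =
      P * Pᵀ + X * Λ * Xᵀ - Γ * Xᵀ := by
  simp only [transpose_sub, transpose_smul, transpose_mul, transpose_transpose, Matrix.add_mul,
    Matrix.sub_mul, Matrix.mul_sub, Matrix.smul_mul, Matrix.mul_smul, Matrix.mul_assoc]
  abel

theorem pendulum_transpose_mul_rate [DecidableEq k] (c : R) {X : Matrix m k R}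
    (P Γ : Matrix m k R) (Λ : Matrix k k R) (hX : Xᵀ * X = 1) :
    (P - c • (X * (Pᵀ * X)))ᵀ * P + Xᵀ * (c • (P * (Xᵀ * P)) - Γ + X * Λ) =
      Pᵀ * P + Λ - Xᵀ * Γ := by
  have multiplier_term : Xᵀ * (X * Λ) = Λ := by rw [← Matrix.mul_assoc, hX, Matrix.one_mul]
  simp only [transpose_sub, transpose_smul, transpose_mul, transpose_transpose, Matrix.mul_add,
    Matrix.sub_mul, Matrix.mul_sub, Matrix.smul_mul, Matrix.mul_smul, Matrix.mul_assoc,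
    multiplier_term]
  abel

end PendulumAlgebra

theorem pendulum_momentum_form_general {m k 𝔸 : Type*} [Fintype m] [Fintype k] [DecidableEq k]
    [NormedCommRing 𝔸] [NormedAlgebra ℝ 𝔸] (Γ : Matrix m k 𝔸) (κ : 𝔸)
    (X P : ℝ → Matrix m k 𝔸) (X' P' : Matrix m k 𝔸) (t : ℝ)
    (hX : HasMatDerivAt X X' t) (hP : HasMatDerivAt P P' t)
    (hc1 : (X t)ᵀ * X t = 1)
    (hc2 : (X t)ᵀ * P t + (P t)ᵀ * X t = 0)
    (Λ : Matrix k k 𝔸) (hΛ : Λ.IsSymm)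
    (heqX : X' = P t - (1 + 2 * κ) • (X t * ((P t)ᵀ * X t)))
    (heqP : P' = (1 + 2 * κ) • (P t * ((X t)ᵀ * P t)) - Γ + X t * Λ) :
    X' = (P t * (X t)ᵀ - X t * (P t)ᵀ) * X t
        + κ • (X t * ((X t)ᵀ * P t - (P t)ᵀ * X t)) ∧
      HasMatDerivAt (fun s => P s * (X s)ᵀ - X s * (P s)ᵀ)
        (X t * Γᵀ - Γ * (X t)ᵀ) t ∧
      HasMatDerivAt (fun s => (X s)ᵀ * P s - (P s)ᵀ * X s)
        (Γᵀ * X t - (X t)ᵀ * Γ) t := by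
  subst heqX heqP
  have left_rate := hP.mul hX.transpose
  have right_rate := hX.transpose.mul hP
  rw [pendulum_mul_transpose_rate] at left_rate
  rw [pendulum_transpose_mul_rate _ _ _ _ hc1] at right_rate
  have left_symm : (P t * (P t)ᵀ + X t * Λ * (X t)ᵀ).IsSymm :=
    (isSymm_rect_mul_transpose_self (P t)).add (isSymm_mul_mul_transpose hΛ _)
  have right_symm : ((P t)ᵀ * P t + Λ).IsSymm := (isSymm_rect_mul_transpose_self (P t)ᵀ).add hΛ
  refine ⟨pendulum_velocity_eq_momentum_action κ hc1 hc2, ?_, ?_⟩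
  · simpa only [transpose_mul, transpose_transpose] using
      left_rate.sub_transpose_of_isSymm left_symm
  · simpa only [transpose_mul, transpose_transpose] using
      right_rate.sub_transpose_of_isSymm right_symm

/-- Along the pendulum flow on `V(n,r)`, with `Φ = PXᵀ - XPᵀ` and
`Ψ = XᵀP - PᵀX`, one has `X' = ΦX + κXΨ`, `Φ' = XΓᵀ - ΓXᵀ`, `Ψ' = ΓᵀX - XᵀΓ`. -/
theorem pendulum_momentum_form (n r : ℕ)
    (Γ : Matrix (Fin n) (Fin r) ℝ) (κ : ℝ)
    (X P : ℝ → Matrix (Fin n) (Fin r) ℝ)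
    (X' P' : Matrix (Fin n) (Fin r) ℝ) (t : ℝ)
    (hX : HasMatDerivAt X X' t) (hP : HasMatDerivAt P P' t)
    (hc1 : (X t)ᵀ * X t = 1)
    (hc2 : (X t)ᵀ * P t + (P t)ᵀ * X t = 0)
    (Λ : Matrix (Fin r) (Fin r) ℝ)
    (hΛ : Λ = (1 / 2 : ℝ) • (-(2 : ℝ) • ((P t)ᵀ * P t) + (X t)ᵀ * Γ + Γᵀ * X t))
    (heqX : X' = P t - (1 + 2 * κ) • (X t * ((P t)ᵀ * X t)))
    (heqP : P' = (1 + 2 * κ) • (P t * ((X t)ᵀ * P t)) - Γ + X t * Λ) :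
    X' = (P t * (X t)ᵀ - X t * (P t)ᵀ) * X t
        + κ • (X t * ((X t)ᵀ * P t - (P t)ᵀ * X t)) ∧
      HasMatDerivAt (fun s => P s * (X s)ᵀ - X s * (P s)ᵀ)
        (X t * Γᵀ - Γ * (X t)ᵀ) t ∧
      HasMatDerivAt (fun s => (X s)ᵀ * P s - (P s)ᵀ * X s)
        (Γᵀ * X t - (X t)ᵀ * Γ) t := by
  exact pendulum_momentum_form_general Γ κ X P X' P' t hX hP hc1 hc2 Λ
    (hΛ ▸ pendulum_multiplier_isSymm _ _ _ _ _) heqX heqP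
end

section
/- Let a ∈ ℝʳ, α ∈ ℝⁿ, and set Γ = α aᵀ (the n×r matrix whose i-th column is aᵢα). Suppose X : ℝ → M_{n,r}(ℝ) and Φ : ℝ → so(n) are differentiable and at time t satisfy X' = ΦX and Φ' = XΓᵀ - ΓXᵀ. Then the curve x = Xa = a₁e₁ + ... + a_re_r (where e₁,...,e_r are the columns of X) satisfies at time t: x' = Φx and Φ' = x∧α. -/
open Matrix

/-- Entrywise derivative of a vector-valued curve. -/
def HasVecDerivAt {m : Type*} (f : ℝ → m → ℝ) (f' : m → ℝ) (t : ℝ) : Prop :=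
  ∀ i, HasDerivAt (fun s => f s i) (f' i) t

/-- The wedge `u∧v = uvᵀ - vuᵀ` of two vectors in `ℝⁿ`. -/
def wedge {n : ℕ} (u v : Fin n → ℝ) : Matrix (Fin n) (Fin n) ℝ :=
  vecMulVec u v - vecMulVec v u

theorem HasMatDerivAt.mulVec_const {m k : Type*} [Fintype k] {F : ℝ → Matrix m k ℝ}
    {F' : Matrix m k ℝ} {t : ℝ} (hF : HasMatDerivAt F F' t) (v : k → ℝ) :
    HasVecDerivAt (fun s => F s *ᵥ v) (F' *ᵥ v) t := fun i =>
  HasDerivAt.fun_sum fun j _ => (hF i j).mul_const (v j)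

theorem mul_transpose_vecMulVec_sub_eq_wedge {n : ℕ} {k : Type*} [Fintype k]
    (A : Matrix (Fin n) k ℝ) (u : Fin n → ℝ) (v : k → ℝ) :
    A * (vecMulVec u v)ᵀ - vecMulVec u v * Aᵀ = wedge (A *ᵥ v) u := by
  rw [wedge, transpose_vecMulVec, mul_vecMulVec, vecMulVec_mul, vecMul_transpose]

theorem pendulum_reduced_equations_general {n : ℕ} {k : Type*} [Fintype k]
    {a : k → ℝ} {α : Fin n → ℝ} {Γ : Matrix (Fin n) k ℝ} (hΓ : Γ = vecMulVec α a)
    {X : ℝ → Matrix (Fin n) k ℝ} {Φ : ℝ → Matrix (Fin n) (Fin n) ℝ}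
    {X' : Matrix (Fin n) k ℝ} {Φ' : Matrix (Fin n) (Fin n) ℝ} {t : ℝ}
    (hX : HasMatDerivAt X X' t) (_hΦ : HasMatDerivAt Φ Φ' t)
    (heqX : X' = Φ t * X t) (heqΦ : Φ' = X t * Γᵀ - Γ * (X t)ᵀ) :
    HasVecDerivAt (fun s => X s *ᵥ a) (Φ t *ᵥ (X t *ᵥ a)) t ∧ Φ' = wedge (X t *ᵥ a) α := by
  subst hΓ heqX
  refine ⟨?_, heqΦ.trans (mul_transpose_vecMulVec_sub_eq_wedge (X t) α a)⟩
  rw [mulVec_mulVec]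
  exact hX.mulVec_const a

/-- For `Γ = αaᵀ`, the equations `X' = ΦX`, `Φ' = XΓᵀ - ΓXᵀ` imply
that `x = Xa` satisfies `x' = Φx` and `Φ' = x∧α`. -/
theorem pendulum_reduced_equations (n r : ℕ)
    (a : Fin r → ℝ) (α : Fin n → ℝ)
    (Γ : Matrix (Fin n) (Fin r) ℝ) (hΓ : Γ = vecMulVec α a)
    (X : ℝ → Matrix (Fin n) (Fin r) ℝ) (Φ : ℝ → Matrix (Fin n) (Fin n) ℝ)
    (hΦskew : ∀ s, (Φ s)ᵀ = -Φ s)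
    (X' : Matrix (Fin n) (Fin r) ℝ) (Φ' : Matrix (Fin n) (Fin n) ℝ) (t : ℝ)
    (hX : HasMatDerivAt X X' t) (hΦ : HasMatDerivAt Φ Φ' t)
    (heqX : X' = Φ t * X t) (heqΦ : Φ' = X t * Γᵀ - Γ * (X t)ᵀ) :
    HasVecDerivAt (fun s => (X s).mulVec a) ((Φ t).mulVec ((X t).mulVec a)) t ∧
      Φ' = wedge ((X t).mulVec a) α :=
  pendulum_reduced_equations_general hΓ hX hΦ heqX heqΦ
end

section
/- Let α ∈ ℝⁿ, x : ℝ → ℝⁿ, and Φ : ℝ → so(n) be differentiable curves satisfying at time t the equations x' = Φx and Φ' = x∧α. For λ ∈ ℝ define the (n+1)×(n+1) matrices L̃(λ) with blocks (-λΦ, x+λ²α; -(x+λ²α)ᵀ, 0) and Ã(λ) with blocks (-Φ, λα; -λαᵀ, 0). Then d/dt L̃(λ) = [L̃(λ), Ã(λ)] holds at time t for every λ ∈ ℝ. (Lax representation of the SO(n-1)-invariant V(n,r)-pendulum with the normal metric, κ = 0.) -/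
open Matrix

/-- The Lax matrix `L̃(λ)` of the `SO(n-1)`-invariant pendulum (κ = 0):
blocks `(-λΦ, x + λ²α; -(x + λ²α)ᵀ, 0)`. -/
def reducedLax {n : ℕ} (α x : Fin n → ℝ) (Φ : Matrix (Fin n) (Fin n) ℝ) (lam : ℝ) :
    Matrix (Fin n ⊕ Unit) (Fin n ⊕ Unit) ℝ :=
  fromBlocks (-(lam • Φ)) (Matrix.of fun i (_ : Unit) => x i + lam ^ 2 * α i)
    (Matrix.of fun (_ : Unit) j => -(x j + lam ^ 2 * α j)) 0

/-- The matrix `Ã(λ)` of the Lax pair: blocks `(-Φ, λα; -λαᵀ, 0)`. -/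
def reducedLaxA {n : ℕ} (α : Fin n → ℝ) (Φ : Matrix (Fin n) (Fin n) ℝ) (lam : ℝ) :
    Matrix (Fin n ⊕ Unit) (Fin n ⊕ Unit) ℝ :=
  fromBlocks (-Φ) (Matrix.of fun i (_ : Unit) => lam * α i)
    (Matrix.of fun (_ : Unit) j => -(lam * α j)) 0

/-!
Matrices of the form `(M, u; -uᵀ, 0)` with `M` skew-symmetric realise `so(n+1)` as
`so(n) ⊕ ℝⁿ`, with bracket `[(M, u), (N, v)] = ([M, N] - u∧v, Mv - Nu)`. The Lax pair consists of
`L̃ = (-λΦ, x + λ²α)` and `Ã = (-Φ, λα)`. In the bracket `[λΦ, Φ]` and `λ²α∧λα` vanish and the two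
terms `λ²Φα` cancel, which leaves `(-λ x∧α, Φx)`, the derivative of `L̃` along the flow.
-/

/-- The bordered matrix `(M, u; -uᵀ, 0)`, which encodes a pair in `so(n) ⊕ Rⁿ` as an element of
`so(n+1)` when `M` is skew-symmetric; skew-symmetry of `M` is not part of the definition. -/
def skewBorder {m R : Type*} [Zero R] [Neg R] (M : Matrix m m R) (u : m → R) :
    Matrix (m ⊕ Unit) (m ⊕ Unit) R :=
  fromBlocks M (replicateCol Unit u) (-replicateRow Unit u) 0

theorem fromBlocks_sub_fromBlocks {l m o p R : Type*} [AddGroup R] (A A' : Matrix l o R)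
    (B B' : Matrix l p R) (C C' : Matrix m o R) (D D' : Matrix m p R) :
    fromBlocks A B C D - fromBlocks A' B' C' D' =
      fromBlocks (A - A') (B - B') (C - C') (D - D') := by
  simp only [sub_eq_add_neg, fromBlocks_neg, fromBlocks_add]

theorem skewBorder_mul_skewBorder {m R : Type*} [Fintype m] [NonUnitalNonAssocRing R]
    (M N : Matrix m m R) (u v : m → R) :
    skewBorder M u * skewBorder N v =
      fromBlocks (M * N - vecMulVec u v) (replicateCol Unit (M *ᵥ v))
        (-replicateRow Unit (u ᵥ* N)) (of fun _ _ => -(u ⬝ᵥ v)) := by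
  simp only [skewBorder, fromBlocks_multiply]
  congr 1
  · rw [Matrix.mul_neg, vecMulVec_eq Unit, sub_eq_add_neg]
  · rw [Matrix.mul_zero, add_zero, replicateCol_mulVec]
  · rw [Matrix.zero_mul, add_zero, Matrix.neg_mul, replicateRow_vecMul]
  · ext
    simp [replicateRow_mul_replicateCol_apply]

section Commutator

variable {m R : Type*} [Fintype m] [NonUnitalCommRing R]

theorem vecMul_eq_neg_mulVec_of_transpose_eq_neg {M : Matrix m m R} (hM : Mᵀ = -M) (u : m → R) :
    u ᵥ* M = -(M *ᵥ u) := by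
  rw [← mulVec_transpose, hM, neg_mulVec]

theorem lie_skewBorder {M N : Matrix m m R} (hM : Mᵀ = -M) (hN : Nᵀ = -N) (u v : m → R) :
    ⁅skewBorder M u, skewBorder N v⁆ =
      skewBorder (⁅M, N⁆ - (vecMulVec u v - vecMulVec v u)) (M *ᵥ v - N *ᵥ u) := by
  rw [Ring.lie_def, Ring.lie_def, skewBorder_mul_skewBorder, skewBorder_mul_skewBorder,
    vecMul_eq_neg_mulVec_of_transpose_eq_neg hM, vecMul_eq_neg_mulVec_of_transpose_eq_neg hN,
    dotProduct_comm v u, skewBorder, fromBlocks_sub_fromBlocks]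
  congr 1
  · abel
  · ext i j
    simp only [Matrix.sub_apply, Matrix.neg_apply, replicateRow_apply, Pi.neg_apply, Pi.sub_apply]
    abel
  · exact sub_self _

end Commutator

section LaxPair

variable {n : ℕ}

theorem reducedLax_eq_skewBorder (α x : Fin n → ℝ) (Φ : Matrix (Fin n) (Fin n) ℝ) (lam : ℝ) :
    reducedLax α x Φ lam = skewBorder (-(lam • Φ)) (x + lam ^ 2 • α) :=
  rfl

theorem reducedLaxA_eq_skewBorder (α : Fin n → ℝ) (Φ : Matrix (Fin n) (Fin n) ℝ) (lam : ℝ) :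
    reducedLaxA α Φ lam = skewBorder (-Φ) (lam • α) :=
  rfl

theorem wedge_add_smul_smul (x α : Fin n → ℝ) (a b : ℝ) :
    wedge (x + a • α) (b • α) = b • wedge x α := by
  ext i j
  simp only [wedge, Matrix.sub_apply, Matrix.smul_apply, vecMulVec_apply, Pi.add_apply,
    Pi.smul_apply, smul_eq_mul]
  ring

theorem lie_reducedLax_reducedLaxA (α x : Fin n → ℝ) {Φ : Matrix (Fin n) (Fin n) ℝ}
    (hΦ : Φᵀ = -Φ) (lam : ℝ) :
    ⁅reducedLax α x Φ lam, reducedLaxA α Φ lam⁆ = skewBorder (-(lam • wedge x α)) (Φ *ᵥ x) := by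
  have hskew : (-Φ)ᵀ = -(-Φ) := by rw [transpose_neg, hΦ]
  have hskew_smul : (-(lam • Φ))ᵀ = -(-(lam • Φ)) := by
    rw [transpose_neg, transpose_smul, hΦ, smul_neg]
  have hcomm : ⁅-(lam • Φ), -Φ⁆ = 0 :=
    commute_iff_lie_eq.mp ((Commute.refl Φ).smul_left lam).neg_left.neg_right
  have hborder : -(lam • Φ) *ᵥ (lam • α) - (-Φ) *ᵥ (x + lam ^ 2 • α) = Φ *ᵥ x := by
    simp only [neg_mulVec, smul_mulVec, mulVec_smul, mulVec_add]
    module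
  rw [reducedLax_eq_skewBorder, reducedLaxA_eq_skewBorder, lie_skewBorder hskew_smul hskew, hcomm,
    hborder, ← wedge, wedge_add_smul_smul, zero_sub]

end LaxPair

theorem HasMatDerivAt.fromBlocks {l m o p E : Type*} [NormedAddCommGroup E] [NormedSpace ℝ E]
    {A : ℝ → Matrix l o E} {B : ℝ → Matrix l p E} {C : ℝ → Matrix m o E} {D : ℝ → Matrix m p E}
    {A' : Matrix l o E} {B' : Matrix l p E} {C' : Matrix m o E} {D' : Matrix m p E} {t : ℝ}
    (hA : HasMatDerivAt A A' t) (hB : HasMatDerivAt B B' t) (hC : HasMatDerivAt C C' t)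
    (hD : HasMatDerivAt D D' t) :
    HasMatDerivAt (fun s => fromBlocks (A s) (B s) (C s) (D s)) (fromBlocks A' B' C' D') t := by
  rintro (i | i) (j | j)
  exacts [hA i j, hB i j, hC i j, hD i j]

theorem HasMatDerivAt.skewBorder {m : Type*} {M : ℝ → Matrix m m ℝ} {M' : Matrix m m ℝ}
    {u : ℝ → m → ℝ} {u' : m → ℝ} {t : ℝ} (hM : HasMatDerivAt M M' t) (hu : HasVecDerivAt u u' t) :
    HasMatDerivAt (fun s => skewBorder (M s) (u s)) (skewBorder M' u') t :=
  hM.fromBlocks (fun i _ => hu i) (fun _ j => (hu j).fun_neg) fun _ _ => hasDerivAt_const t 0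

theorem hasMatDerivAt_reducedLax {n : ℕ} (α : Fin n → ℝ) {x : ℝ → Fin n → ℝ} {x' : Fin n → ℝ}
    {Φ : ℝ → Matrix (Fin n) (Fin n) ℝ} {Φ' : Matrix (Fin n) (Fin n) ℝ} {t : ℝ}
    (hΦ : HasMatDerivAt Φ Φ' t) (hx : HasVecDerivAt x x' t) (lam : ℝ) :
    HasMatDerivAt (fun s => reducedLax α (x s) (Φ s) lam) (skewBorder (-(lam • Φ')) x') t :=
  HasMatDerivAt.skewBorder (fun i j => ((hΦ i j).const_mul lam).fun_neg)
    fun i => (hx i).add_const (lam ^ 2 * α i)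

/-- the equations `x' = Φx`, `Φ' = x∧α` imply the Lax equation
`d/dt L̃(λ) = [L̃(λ), Ã(λ)]` for every `λ ∈ ℝ`. -/
theorem reduced_pendulum_lax (n : ℕ) (α : Fin n → ℝ)
    (x : ℝ → Fin n → ℝ) (Φ : ℝ → Matrix (Fin n) (Fin n) ℝ)
    (hΦskew : ∀ s, (Φ s)ᵀ = -Φ s)
    (x' : Fin n → ℝ) (Φ' : Matrix (Fin n) (Fin n) ℝ) (t : ℝ)
    (hx : HasVecDerivAt x x' t) (hΦ : HasMatDerivAt Φ Φ' t)
    (heqx : x' = (Φ t).mulVec (x t)) (heqΦ : Φ' = wedge (x t) α) :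
    ∀ lam : ℝ,
      HasMatDerivAt (fun s => reducedLax α (x s) (Φ s) lam)
        (reducedLax α (x t) (Φ t) lam * reducedLaxA α (Φ t) lam
          - reducedLaxA α (Φ t) lam * reducedLax α (x t) (Φ t) lam) t := by
  intro lam
  rw [← Ring.lie_def, lie_reducedLax_reducedLaxA α (x t) (hΦskew t) lam, ← heqx, ← heqΦ]
  exact hasMatDerivAt_reducedLax α hΦ hx lam
end

section
/- Let α ∈ ℝⁿ with ⟨α,α⟩ = 1, and let x : ℝ → ℝⁿ and Φ : ℝ → M_n(ℝ) be differentiable curves such that at time t one has Φ' = x∧α. Then the truncated momentum map Φ_α = Φ - (Φα)∧α satisfies dΦ_α/dt = 0 at time t. (The components of Φ_α are Noether integrals of the SO(n-1)-invariant pendulum.) -/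
open Matrix

section HasMatDerivAt

open Filter Topology

variable {m k p q E F : Type*} [NormedAddCommGroup E] [NormedSpace ℝ E]
  [NormedAddCommGroup F] [NormedSpace ℝ F] {A : ℝ → Matrix m k E} {A' : Matrix m k E} {t : ℝ}

theorem hasMatDerivAt_iff_tendsto_slope :
    HasMatDerivAt A A' t ↔ Tendsto (slope A t) (𝓝[≠] t) (𝓝 A') := by
  simp only [HasMatDerivAt, hasDerivAt_iff_tendsto_slope]
  exact (forall_congr' fun _ => tendsto_pi_nhds.symm).trans tendsto_pi_nhds.symm

theorem HasMatDerivAt.continuousLinearMap_comp (L : Matrix m k E →L[ℝ] Matrix p q F)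
    (hA : HasMatDerivAt A A' t) : HasMatDerivAt (fun s => L (A s)) (L A') t := by
  have slope_comp : slope (fun s => L (A s)) t = fun s => L (slope A t s) :=
    funext (L.toLinearMap.slope_comp A t)
  rw [hasMatDerivAt_iff_tendsto_slope, slope_comp]
  exact (L.continuous.tendsto A').comp (hasMatDerivAt_iff_tendsto_slope.1 hA)

end HasMatDerivAt

section Wedge

variable {n : ℕ}

theorem wedge_self (u : Fin n → ℝ) : wedge u u = 0 := sub_self _

theorem add_wedge (u v w : Fin n → ℝ) : wedge (u + v) w = wedge u w + wedge v w := by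
  simp only [wedge, add_vecMulVec, vecMulVec_add, add_sub_add_comm]

theorem smul_wedge (c : ℝ) (u v : Fin n → ℝ) : wedge (c • u) v = c • wedge u v := by
  simp only [wedge, smul_vecMulVec, vecMulVec_smul, smul_sub]

theorem sub_wedge (u v w : Fin n → ℝ) : wedge (u - v) w = wedge u w - wedge v w := by
  simp only [wedge, sub_vecMulVec, vecMulVec_sub, sub_sub_sub_comm]

theorem wedge_mulVec (u v w : Fin n → ℝ) :
    wedge u v *ᵥ w = (v ⬝ᵥ w) • u - (u ⬝ᵥ w) • v := by
  simp only [wedge, sub_mulVec, vecMulVec_mulVec, op_smul_eq_smul]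

/-- The truncation `Φ ↦ Φ_α = Φ - (Φα)∧α`, bundled as a linear map so that it commutes with `d/dt`.
For skew-symmetric `Φ` and a unit vector `α`, it is the momentum map of the isotropy subgroup
of `α`. -/
def truncatedMomentum (α : Fin n → ℝ) :
    Matrix (Fin n) (Fin n) ℝ →ₗ[ℝ] Matrix (Fin n) (Fin n) ℝ where
  toFun Φ := Φ - wedge (Φ *ᵥ α) α
  map_add' Φ Ψ := by rw [add_mulVec, add_wedge, add_sub_add_comm]
  map_smul' c Φ := by rw [smul_mulVec, smul_wedge, RingHom.id_apply, smul_sub]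

theorem truncatedMomentum_apply (α : Fin n → ℝ) (Φ : Matrix (Fin n) (Fin n) ℝ) :
    truncatedMomentum α Φ = Φ - wedge (Φ *ᵥ α) α := rfl

theorem truncatedMomentum_wedge (u α : Fin n → ℝ) :
    truncatedMomentum α (wedge u α) = (1 - α ⬝ᵥ α) • wedge u α := by
  rw [truncatedMomentum_apply, wedge_mulVec, sub_wedge, smul_wedge, smul_wedge, wedge_self,
    smul_zero, sub_zero, sub_smul, one_smul]

end Wedge

/-- If `α` is a unit vector and `Φ' = x∧α` at time `t`, then the
truncated momentum map `Φ_α = Φ - (Φα)∧α` is conserved: `dΦ_α/dt = 0` at `t`. -/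
theorem noether_truncated_momentum (n : ℕ) (α : Fin n → ℝ)
    (hα : α ⬝ᵥ α = 1)
    (x : ℝ → Fin n → ℝ) (Φ : ℝ → Matrix (Fin n) (Fin n) ℝ) (t : ℝ)
    (hΦ : HasMatDerivAt Φ (wedge (x t) α) t) :
    HasMatDerivAt (fun s => Φ s - wedge ((Φ s).mulVec α) α) 0 t := by
  have truncated_torque : truncatedMomentum α (wedge (x t) α) = 0 := by
    rw [truncatedMomentum_wedge, hα, sub_self, zero_smul]
  rw [← truncated_torque]
  exact hΦ.continuousLinearMap_comp (truncatedMomentum α).toContinuousLinearMap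
end

section
/- Let Ξ be a real skew-symmetric n×n matrix and κ ∈ ℝ. Suppose e₁, e₂, p₁, p₂ : ℝ → ℝⁿ are differentiable curves which at time t satisfy the constraints ⟨e₁,e₁⟩ = ⟨e₂,e₂⟩ = 1, ⟨e₁,e₂⟩ = ⟨e₁,p₁⟩ = ⟨e₂,p₂⟩ = 0, ⟨e₁,p₂⟩ + ⟨e₂,p₁⟩ = 0, together with the equations e₁' = p₁ - (1+2κ)⟨e₁,p₂⟩e₂, e₂' = p₂ - (1+2κ)⟨e₂,p₁⟩e₁, p₁' = Ξe₂ + (1+2κ)⟨p₁,e₂⟩p₂ + λ₁₁e₁ + λ₁₂e₂, p₂' = -Ξe₁ + (1+2κ)⟨p₂,e₁⟩p₁ + λ₂₁e₁ + λ₂₂e₂, where λ₁₁ = -⟨p₁,p₁⟩ - ⟨e₁,Ξe₂⟩, λ₁₂ = λ₂₁ = -⟨p₁,p₂⟩, λ₂₂ = -⟨p₂,p₂⟩ - ⟨e₁,Ξe₂⟩. Then at time t the derivatives of all six constraint functions ⟨e₁,e₁⟩-1, ⟨e₂,e₂⟩-1, ⟨e₁,e₂⟩, ⟨e₁,p₁⟩,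 ⟨e₂,p₂⟩, ⟨e₁,p₂⟩+⟨e₂,p₁⟩ vanish. -/
open Matrix

/-!
By orthonormality of the frame, pairing the momentum equations with `e₁` and `e₂` isolates the
multipliers, whose values cancel the remaining terms in the differentiated constraints. Exchanging
the indices `1` and `2` while replacing `Ξ` by `-Ξ` maps the system to itself, so only one of
`⟨e₁, p₁⟩`, `⟨e₂, p₂⟩` and one of `⟨e₁, e₁⟩`, `⟨e₂, e₂⟩` has to be treated. In the derivative of
`⟨e₁, p₂⟩ + ⟨e₂, p₁⟩` the operator contributes `⟨e₂, Ξ e₂⟩ - ⟨e₁, Ξ e₁⟩`, which vanishes because `Ξ`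
is skew: `⟨x, Ξ x⟩ = 0` for all `x`, which for a bilinear form `B` is `(B.compl₂ Ξ).IsAlt`.
-/

section Algebra

variable {R M : Type*} [CommRing R] [AddCommGroup M] [Module R M]

/-- The cotangent bundle of the Stiefel variety of orthonormal pairs for a bilinear form: `p`, `q`
are the momenta of the frame vectors `e`, `f`. -/
structure IsStiefelCotangent (B : M →ₗ[R] M →ₗ[R] R) (e f p q : M) : Prop where
  unit_left : B e e = 1
  unit_right : B f f = 1
  orthogonal : B e f = 0
  momentum_left : B e p = 0
  momentum_right : B f q = 0
  momentum_mixed : B e q + B f p = 0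

/-- The velocity of the frame vector `e` in the pendulum equations at the state `(e, f, p, q)`; that
of `f` is obtained at the exchanged state `(f, e, q, p)`. -/
def frameVelocity (B : M →ₗ[R] M →ₗ[R] R) (κ : R) (e f p q : M) : M :=
  p - ((1 + 2 * κ) * B e q) • f

/-- The velocity of the momentum `p` in the pendulum equations at the state `(e, f, p, q)`, with the
Lagrange multipliers inserted; that of `q` is obtained at the exchanged state `(f, e, q, p)` with
`-Ξ` in place of `Ξ`. -/
def momentumVelocity (B : M →ₗ[R] M →ₗ[R] R) (Ξ : M →ₗ[R] M) (κ : R) (e f p q : M) : M :=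
  Ξ f + ((1 + 2 * κ) * B p f) • q + (-B p p - B e (Ξ f)) • e + (-B p q) • f

variable {B : M →ₗ[R] M →ₗ[R] R} {Ξ : M →ₗ[R] M} {e f p q : M}

theorem isAlt_compl₂_neg (hΞ : (B.compl₂ Ξ).IsAlt) : (B.compl₂ (-Ξ)).IsAlt := fun x ↦ by
  simpa using hΞ x

theorem momentumVelocity_neg_swap (hB : B.IsSymm) (hΞ : (B.compl₂ Ξ).IsAlt) (κ : R) (e f p q : M) :
    momentumVelocity B (-Ξ) κ f e q p =
      -Ξ e + ((1 + 2 * κ) * B q e) • p + (-B p q) • e + (-B q q - B e (Ξ f)) • f := by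
  have hqp : B q p = B p q := hB.eq q p
  have hskew : B f (Ξ e) = -B e (Ξ f) := (hΞ.neg e f).symm
  simp only [momentumVelocity, LinearMap.neg_apply, map_neg, hqp, hskew, neg_neg]
  exact add_right_comm _ _ _

namespace IsStiefelCotangent

theorem swap (hB : B.IsSymm) (h : IsStiefelCotangent B e f p q) :
    IsStiefelCotangent B f e q p where
  unit_left := h.unit_right
  unit_right := h.unit_left
  orthogonal := hB.eq_iff.1 h.orthogonal
  momentum_left := h.momentum_right
  momentum_right := h.momentum_left
  momentum_mixed := (add_comm _ _).trans h.momentum_mixed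

theorem unit_linearized (hB : B.IsSymm) (κ : R) (h : IsStiefelCotangent B e f p q) :
    B (frameVelocity B κ e f p q) e + B e (frameVelocity B κ e f p q) = 0 := by
  have hv : B e (frameVelocity B κ e f p q) = 0 := by
    simp [frameVelocity, h.momentum_left, h.orthogonal]
  rw [hB.eq_iff.1 hv, hv, add_zero]

theorem orthogonal_linearized (hB : B.IsSymm) (κ : R) (h : IsStiefelCotangent B e f p q) :
    B (frameVelocity B κ e f p q) f + B e (frameVelocity B κ f e q p) = 0 := by
  have hpf : B p f = B f p := hB.eq p f
  simp only [frameVelocity, map_sub, map_smul, LinearMap.sub_apply, LinearMap.smul_apply,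
    smul_eq_mul, hpf, h.unit_left, h.unit_right]
  linear_combination (-2 * κ) * h.momentum_mixed

theorem momentum_linearized (hB : B.IsSymm) (Ξ : M →ₗ[R] M) (κ : R)
    (h : IsStiefelCotangent B e f p q) :
    B (frameVelocity B κ e f p q) p + B e (momentumVelocity B Ξ κ e f p q) = 0 := by
  have hpf : B p f = B f p := hB.eq p f
  simp only [frameVelocity, momentumVelocity, map_sub, map_add, map_smul, LinearMap.sub_apply,
    LinearMap.smul_apply, smul_eq_mul, hpf, h.unit_left, h.orthogonal]
  ring

theorem frameVelocity_apply_right (κ : R) (h : IsStiefelCotangent B e f p q) :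
    B (frameVelocity B κ e f p q) q = B p q := by
  simp [frameVelocity, h.momentum_right]

theorem apply_momentumVelocity_right (hB : B.IsSymm) (hΞ : (B.compl₂ Ξ).IsAlt) (κ : R)
    (h : IsStiefelCotangent B e f p q) :
    B f (momentumVelocity B Ξ κ e f p q) = -B p q := by
  have hΞf : B f (Ξ f) = 0 := hΞ f
  simp [momentumVelocity, hΞf, h.unit_right, (h.swap hB).orthogonal, h.momentum_right]

theorem momentum_mixed_linearized (hB : B.IsSymm) (hΞ : (B.compl₂ Ξ).IsAlt) (κ : R)
    (h : IsStiefelCotangent B e f p q) :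
    B (frameVelocity B κ e f p q) q + B e (momentumVelocity B (-Ξ) κ f e q p) +
      (B (frameVelocity B κ f e q p) p + B f (momentumVelocity B Ξ κ e f p q)) = 0 := by
  have h' := h.swap hB
  rw [h.frameVelocity_apply_right κ, h'.frameVelocity_apply_right κ,
    h.apply_momentumVelocity_right hB hΞ κ,
    h'.apply_momentumVelocity_right hB (isAlt_compl₂_neg hΞ) κ]
  abel

end IsStiefelCotangent

end Algebra

section Calculus

variable {𝕜 V : Type*} [NontriviallyNormedField 𝕜] [NormedAddCommGroup V] [NormedSpace 𝕜 V]

theorem v_n2_pendulum_constraints_preserved_general (B : V →L[𝕜] V →L[𝕜] 𝕜)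
    (hB : B.toLinearMap₁₂.IsSymm) (Ξ : V →ₗ[𝕜] V) (hΞ : (B.toLinearMap₁₂.compl₂ Ξ).IsAlt) (κ : 𝕜)
    {e₁ e₂ p₁ p₂ : 𝕜 → V} {e₁' e₂' p₁' p₂' : V} {t : 𝕜}
    (he₁ : HasDerivAt e₁ e₁' t) (he₂ : HasDerivAt e₂ e₂' t)
    (hp₁ : HasDerivAt p₁ p₁' t) (hp₂ : HasDerivAt p₂ p₂' t)
    (h : IsStiefelCotangent B.toLinearMap₁₂ (e₁ t) (e₂ t) (p₁ t) (p₂ t))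
    (heq₁ : e₁' = frameVelocity B.toLinearMap₁₂ κ (e₁ t) (e₂ t) (p₁ t) (p₂ t))
    (heq₂ : e₂' = frameVelocity B.toLinearMap₁₂ κ (e₂ t) (e₁ t) (p₂ t) (p₁ t))
    (heq₃ : p₁' = momentumVelocity B.toLinearMap₁₂ Ξ κ (e₁ t) (e₂ t) (p₁ t) (p₂ t))
    (heq₄ : p₂' = momentumVelocity B.toLinearMap₁₂ (-Ξ) κ (e₂ t) (e₁ t) (p₂ t) (p₁ t)) :
    HasDerivAt (fun s => B (e₁ s) (e₁ s) - 1) 0 t ∧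
    HasDerivAt (fun s => B (e₂ s) (e₂ s) - 1) 0 t ∧
    HasDerivAt (fun s => B (e₁ s) (e₂ s)) 0 t ∧
    HasDerivAt (fun s => B (e₁ s) (p₁ s)) 0 t ∧
    HasDerivAt (fun s => B (e₂ s) (p₂ s)) 0 t ∧
    HasDerivAt (fun s => B (e₁ s) (p₂ s) + B (e₂ s) (p₁ s)) 0 t := by
  subst heq₁ heq₂ heq₃ heq₄
  have h' := h.swap hB
  have product_rule {u v : 𝕜 → V} {u' v' : V} (hu : HasDerivAt u u' t) (hv : HasDerivAt v v' t) :
      HasDerivAt (fun s => B (u s) (v s)) (B u' (v t) + B (u t) v') t :=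
    add_comm (B u' (v t)) _ ▸ B.hasDerivAt_of_bilinear (fun _ => hu) (fun _ => hv)
  refine ⟨((product_rule he₁ he₁).sub_const 1).congr_deriv (h.unit_linearized hB κ),
    ((product_rule he₂ he₂).sub_const 1).congr_deriv (h'.unit_linearized hB κ),
    (product_rule he₁ he₂).congr_deriv (h.orthogonal_linearized hB κ),
    (product_rule he₁ hp₁).congr_deriv (h.momentum_linearized hB Ξ κ),
    (product_rule he₂ hp₂).congr_deriv (h'.momentum_linearized hB (-Ξ) κ),
    ((product_rule he₁ hp₂).add (product_rule he₂ hp₁)).congr_deriv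
      (h.momentum_mixed_linearized hB hΞ κ)⟩

end Calculus

theorem isSymm_dotProductBilin {R m : Type*} [CommSemiring R] [Fintype m] :
    (dotProductBilin R R : (m → R) →ₗ[R] (m → R) →ₗ[R] R).IsSymm :=
  ⟨fun x y ↦ dotProduct_comm x y⟩

theorem isAlt_dotProductBilin_compl₂_mulVecLin {R m : Type*} [CommRing R] [NoZeroDivisors R]
    [CharZero R] [Fintype m] {A : Matrix m m R} (hA : Aᵀ = -A) :
    ((dotProductBilin R R).compl₂ A.mulVecLin).IsAlt := by
  refine LinearMap.isAlt_iff_eq_neg_flip.2 (LinearMap.ext₂ fun x y ↦ ?_)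
  change x ⬝ᵥ A *ᵥ y = -(y ⬝ᵥ A *ᵥ x)
  rw [dotProduct_mulVec, ← mulVec_transpose, hA, neg_mulVec, neg_dotProduct, dotProduct_comm]

/-- The Lagrange multipliers of the `V(n,2)`-pendulum make its flow
tangent to the constraint variety: along the flow, the derivatives of all six
constraint functions vanish. -/
theorem v_n2_pendulum_constraints_preserved (n : ℕ)
    (Ξ : Matrix (Fin n) (Fin n) ℝ) (hΞ : Ξᵀ = -Ξ) (κ : ℝ)
    (e₁ e₂ p₁ p₂ : ℝ → Fin n → ℝ)
    (e₁' e₂' p₁' p₂' : Fin n → ℝ) (t : ℝ)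
    (he₁ : HasVecDerivAt e₁ e₁' t) (he₂ : HasVecDerivAt e₂ e₂' t)
    (hp₁ : HasVecDerivAt p₁ p₁' t) (hp₂ : HasVecDerivAt p₂ p₂' t)
    (c₁ : e₁ t ⬝ᵥ e₁ t = 1) (c₂ : e₂ t ⬝ᵥ e₂ t = 1)
    (c₃ : e₁ t ⬝ᵥ e₂ t = 0) (c₄ : e₁ t ⬝ᵥ p₁ t = 0) (c₅ : e₂ t ⬝ᵥ p₂ t = 0)
    (c₆ : e₁ t ⬝ᵥ p₂ t + e₂ t ⬝ᵥ p₁ t = 0)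
    (l₁₁ l₁₂ l₂₁ l₂₂ : ℝ)
    (hl₁₁ : l₁₁ = -(p₁ t ⬝ᵥ p₁ t) - e₁ t ⬝ᵥ Ξ.mulVec (e₂ t))
    (hl₁₂ : l₁₂ = -(p₁ t ⬝ᵥ p₂ t)) (hl₂₁ : l₂₁ = -(p₁ t ⬝ᵥ p₂ t))
    (hl₂₂ : l₂₂ = -(p₂ t ⬝ᵥ p₂ t) - e₁ t ⬝ᵥ Ξ.mulVec (e₂ t))
    (heq₁ : e₁' = p₁ t - ((1 + 2 * κ) * (e₁ t ⬝ᵥ p₂ t)) • e₂ t)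
    (heq₂ : e₂' = p₂ t - ((1 + 2 * κ) * (e₂ t ⬝ᵥ p₁ t)) • e₁ t)
    (heq₃ : p₁' = Ξ.mulVec (e₂ t) + ((1 + 2 * κ) * (p₁ t ⬝ᵥ e₂ t)) • p₂ t
        + l₁₁ • e₁ t + l₁₂ • e₂ t)
    (heq₄ : p₂' = -Ξ.mulVec (e₁ t) + ((1 + 2 * κ) * (p₂ t ⬝ᵥ e₁ t)) • p₁ t
        + l₂₁ • e₁ t + l₂₂ • e₂ t) :
    HasDerivAt (fun s => e₁ s ⬝ᵥ e₁ s - 1) 0 t ∧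
    HasDerivAt (fun s => e₂ s ⬝ᵥ e₂ s - 1) 0 t ∧
    HasDerivAt (fun s => e₁ s ⬝ᵥ e₂ s) 0 t ∧
    HasDerivAt (fun s => e₁ s ⬝ᵥ p₁ s) 0 t ∧
    HasDerivAt (fun s => e₂ s ⬝ᵥ p₂ s) 0 t ∧
    HasDerivAt (fun s => e₁ s ⬝ᵥ p₂ s + e₂ s ⬝ᵥ p₁ s) 0 t := by
  subst hl₁₁ hl₁₂ hl₂₁ hl₂₂
  have hB := isSymm_dotProductBilin (R := ℝ) (m := Fin n)
  have hAlt := isAlt_dotProductBilin_compl₂_mulVecLin hΞ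
  exact v_n2_pendulum_constraints_preserved_general
    (dotProductBilin (m := Fin n) (A := ℝ) ℝ ℝ).toContinuousBilinearMap hB Ξ.mulVecLin hAlt κ
    (hasDerivAt_pi.2 he₁) (hasDerivAt_pi.2 he₂) (hasDerivAt_pi.2 hp₁) (hasDerivAt_pi.2 hp₂)
    ⟨c₁, c₂, c₃, c₄, c₅, c₆⟩ heq₁ heq₂ heq₃
    (heq₄.trans (momentumVelocity_neg_swap hB hAlt κ _ _ _ _).symm)
end

section
/- Let Ξ be a real skew-symmetric n×n matrix, and let e₁, e₂ : ℝ → ℝⁿ and Φ : ℝ → M_n(ℝ) be differentiable curves such that at time t one has d/dt(e₁∧e₂) = [Φ, e₁∧e₂] and dΦ/dt = [e₁∧e₂, Ξ]. For λ ∈ ℝ define the complex n×n matrices L(λ) = λΦ + i(e₁∧e₂ + λ²Ξ) and A(λ) = Φ + iλΞ. Then d/dt L(λ) = [A(λ), L(λ)] holds at time t for every λ ∈ ℝ. (Lax representation with spectral parameter for the V(n,2)-pendulum.) -/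
open Matrix

/-- A real matrix regarded as a complex one. -/
def cplx {n : ℕ} (M : Matrix (Fin n) (Fin n) ℝ) : Matrix (Fin n) (Fin n) ℂ :=
  M.map Complex.ofReal

/-!
In `⁅Φ + iλΞ, λΦ + i(W + λ²Ξ)⁆` the terms `iλ²⁅Φ, Ξ⁆` and `iλ²⁅Ξ, Φ⁆` cancel, and `i² = -1` turns
`i²λ⁅Ξ, W⁆` into `λ⁅W, Ξ⁆`. What is left, `λ⁅W, Ξ⁆ + i⁅Φ, W⁆`, is the derivative of
`λΦ + i(W + λ²Ξ)` when `⁅Φ, W⁆` is the derivative of `W = e₁∧e₂` and `⁅W, Ξ⁆` that of `Φ`.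
-/

section LaxPair

variable {R 𝔤 : Type*} [CommRing R] [LieRing 𝔤] [LieAlgebra R 𝔤]

/-- The Lax matrix `L(λ) = λΦ + i(W + λ²Ξ)` of the pendulum, with `W` in place of `e₁∧e₂`. It is
defined in any Lie algebra, and `i` is a parameter, to be taken with `i * i = -1`. -/
def laxL (i lam : R) (Ξ W Φ : 𝔤) : 𝔤 :=
  lam • Φ + i • (W + lam ^ 2 • Ξ)

/-- The second matrix `A(λ) = Φ + iλΞ` of the Lax pair whose first matrix is `laxL`; the parameter
`i` is the same as there. -/
def laxA (i lam : R) (Ξ Φ : 𝔤) : 𝔤 :=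
  Φ + (i * lam) • Ξ

theorem lie_laxA_laxL {i : R} (hi : i * i = -1) (lam : R) (Ξ W Φ : 𝔤) :
    ⁅laxA i lam Ξ Φ, laxL i lam Ξ W Φ⁆ = lam • ⁅W, Ξ⁆ + i • ⁅Φ, W⁆ := by
  have coeff : i * lam * i = -lam := by linear_combination lam * hi
  calc
    ⁅laxA i lam Ξ Φ, laxL i lam Ξ W Φ⁆
      = i • ⁅Φ, W⁆ + (i * lam ^ 2) • ⁅Φ, Ξ⁆ + (i * lam * lam) • ⁅Ξ, Φ⁆
          + (i * lam * i) • ⁅Ξ, W⁆ := by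
        simp only [laxA, laxL, add_lie, lie_add, smul_lie, lie_smul, lie_self, smul_zero]
        module
    _ = lam • ⁅W, Ξ⁆ + i • ⁅Φ, W⁆ := by
        rw [coeff, ← lie_skew Ξ Φ, ← lie_skew W Ξ]
        module

end LaxPair

namespace HasMatDerivAt

variable {m k E : Type*} [NormedAddCommGroup E] [NormedSpace ℝ E]
  {F G : ℝ → Matrix m k E} {F' G' : Matrix m k E} {t : ℝ}

theorem add (hF : HasMatDerivAt F F' t) (hG : HasMatDerivAt G G' t) :
    HasMatDerivAt (fun s ↦ F s + G s) (F' + G') t :=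
  fun i j ↦ (hF i j).add (hG i j)

theorem add_const (hF : HasMatDerivAt F F' t) (C : Matrix m k E) :
    HasMatDerivAt (fun s ↦ F s + C) F' t :=
  fun i j ↦ (hF i j).add_const (C i j)

theorem const_smul {R : Type*} [Monoid R] [DistribMulAction R E] [SMulCommClass ℝ R E]
    [ContinuousConstSMul R E] (c : R) (hF : HasMatDerivAt F F' t) :
    HasMatDerivAt (fun s ↦ c • F s) (c • F') t :=
  fun i j ↦ (hF i j).fun_const_smul c

protected theorem cplx {n : ℕ} {F : ℝ → Matrix (Fin n) (Fin n) ℝ} {F' : Matrix (Fin n) (Fin n) ℝ}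
    (hF : HasMatDerivAt F F' t) : HasMatDerivAt (fun s ↦ cplx (F s)) (cplx F') t :=
  fun i j ↦ (hF i j).ofReal_comp

end HasMatDerivAt

attribute [local instance 100] LieRing.ofAssociativeRing

theorem cplx_lie {n : ℕ} (A B : Matrix (Fin n) (Fin n) ℝ) : cplx ⁅A, B⁆ = ⁅cplx A, cplx B⁆ :=
  (Complex.ofRealAm.mapMatrix (m := Fin n)).toLieHom.map_lie A B

theorem v_n2_pendulum_spectral_lax_general {m 𝔸 : Type*} [Fintype m] [DecidableEq m]
    [NormedCommRing 𝔸] [NormedAlgebra ℝ 𝔸] {i : 𝔸} (hi : i * i = -1)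
    {Ξ : Matrix m m 𝔸} {W Φ : ℝ → Matrix m m 𝔸} {t : ℝ}
    (hW : HasMatDerivAt W ⁅Φ t, W t⁆ t) (hΦ : HasMatDerivAt Φ ⁅W t, Ξ⁆ t) (lam : 𝔸) :
    HasMatDerivAt (fun s ↦ laxL i lam Ξ (W s) (Φ s))
      ⁅laxA i lam Ξ (Φ t), laxL i lam Ξ (W t) (Φ t)⁆ t := by
  rw [lie_laxA_laxL hi]
  exact (hΦ.const_smul lam).add ((hW.add_const (lam ^ 2 • Ξ)).const_smul i)

/-- the equations `d/dt(e₁∧e₂) = [Φ, e₁∧e₂]`, `dΦ/dt = [e₁∧e₂, Ξ]`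
imply the Lax equation `d/dt L(λ) = [A(λ), L(λ)]` for every `λ ∈ ℝ`, where
`L(λ) = λΦ + i(e₁∧e₂ + λ²Ξ)` and `A(λ) = Φ + iλΞ`. -/
theorem v_n2_pendulum_spectral_lax (n : ℕ)
    (Ξ : Matrix (Fin n) (Fin n) ℝ) (hΞ : Ξᵀ = -Ξ)
    (e₁ e₂ : ℝ → Fin n → ℝ) (Φ : ℝ → Matrix (Fin n) (Fin n) ℝ)
    (W' Φ' : Matrix (Fin n) (Fin n) ℝ) (t : ℝ)
    (hW : HasMatDerivAt (fun s => wedge (e₁ s) (e₂ s)) W' t)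
    (hΦ : HasMatDerivAt Φ Φ' t)
    (heqW : W' = Φ t * wedge (e₁ t) (e₂ t) - wedge (e₁ t) (e₂ t) * Φ t)
    (heqΦ : Φ' = wedge (e₁ t) (e₂ t) * Ξ - Ξ * wedge (e₁ t) (e₂ t)) :
    ∀ lam : ℝ,
      HasMatDerivAt
        (fun s => (lam : ℂ) • cplx (Φ s)
          + Complex.I • (cplx (wedge (e₁ s) (e₂ s)) + ((lam : ℂ) ^ 2) • cplx Ξ))
        ((cplx (Φ t) + (Complex.I * lam) • cplx Ξ)
            * ((lam : ℂ) • cplx (Φ t)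
              + Complex.I • (cplx (wedge (e₁ t) (e₂ t)) + ((lam : ℂ) ^ 2) • cplx Ξ))
          - ((lam : ℂ) • cplx (Φ t)
              + Complex.I • (cplx (wedge (e₁ t) (e₂ t)) + ((lam : ℂ) ^ 2) • cplx Ξ))
            * (cplx (Φ t) + (Complex.I * lam) • cplx Ξ)) t := by
  subst heqW heqΦ
  exact fun lam ↦ v_n2_pendulum_spectral_lax_general Complex.I_mul_I
    (cplx_lie (Φ t) _ ▸ hW.cplx) (cplx_lie _ Ξ ▸ hΦ.cplx) lam
end

section
/- Let n ≥ r ≥ 1, let X be a real n×r matrix with XᵀX = I_r, let B = diag(b₁,...,bₙ), and let J = diag(-I_r, I_{n-r}) (the diagonal n×n matrix with first r diagonal entries -1 and the rest +1). Then -½ tr((I_n - 2XXᵀ) J B J (I_n - 2XXᵀ) B) = 2 tr(XᵀB²X) - 2 tr(XᵀBXXᵀBX) - ½ tr(B²). In particular, the pull-back of the generalized Neumann potential W(g) = ⟨Ad_g(B), B⟩ on the Cartan model of the Grassmannian under the map π(X) followed by θ(π(X)) = (I_n - 2XXᵀ)J equals, up to an additive constant, four times the fourth-degree potential ½tr(XᵀB²X)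 - ½tr(XᵀBXXᵀBX). -/
open Matrix

/-!
Diagonal matrices commute, so the sign matrix `J` cancels in `J B J = B` and the pulled-back
potential is `-½ tr((B - 2XXᵀB)²)`. Expanding the square and moving `X` around cyclically under the
trace turns the mixed term into `tr(XᵀB²X)` and the quartic term into `tr((XᵀBX)²)`.
-/

section Trace

variable {n r R : Type*} [Fintype n] [Fintype r] [CommRing R]

lemma trace_sub_mul_self (A C : Matrix n n R) :
    ((A - C) * (A - C)).trace = (A * A).trace - 2 * (A * C).trace + (C * C).trace := by
  simp only [sub_mul, mul_sub, trace_sub, trace_mul_comm C A]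
  ring

lemma trace_one_sub_smul_mul_mul_self [DecidableEq n] (c : R) (X : Matrix n r R)
    (Y : Matrix r n R) (B : Matrix n n R) :
    ((1 - c • (X * Y)) * B * (1 - c • (X * Y)) * B).trace
      = (B * B).trace - 2 * c * (Y * (B * B) * X).trace
        + c ^ 2 * (Y * B * X * (Y * B * X)).trace := by
  have square : (1 - c • (X * Y)) * B * (1 - c • (X * Y)) * B
      = (B - c • (X * Y * B)) * (B - c • (X * Y * B)) := by
    rw [Matrix.mul_assoc _ _ B, Matrix.sub_mul, Matrix.one_mul, Matrix.smul_mul]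
  have mixed : (B * (X * Y * B)).trace = (Y * (B * B) * X).trace := by
    rw [trace_mul_comm, trace_mul_comm _ X]
    simp only [Matrix.mul_assoc]
  have quartic : (X * Y * B * (X * Y * B)).trace = (Y * B * X * (Y * B * X)).trace := by
    rw [Matrix.mul_assoc X, Matrix.mul_assoc X, trace_mul_comm]
    simp only [Matrix.mul_assoc]
  rw [square, trace_sub_mul_self]
  simp only [Matrix.mul_smul, Matrix.smul_mul, trace_smul, smul_eq_mul, mixed, quartic]
  ring

end Trace

lemma diagonal_conj_diagonal_of_mul_self_eq_one {n R : Type*} [Fintype n] [DecidableEq n]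
    [CommSemiring R] {d : n → R} (hd : ∀ i, d i * d i = 1) (b : n → R) :
    diagonal d * diagonal b * diagonal d = diagonal b := by
  rw [(commute_diagonal d b).eq, Matrix.mul_assoc, diagonal_mul_diagonal, funext hd, diagonal_one,
    Matrix.mul_one]

theorem neumann_potential_pullback_general {n r R : Type*} [Fintype n] [DecidableEq n] [Fintype r]
    [CommRing R] [Invertible (2 : R)] (X : Matrix n r R) {B J : Matrix n n R} (hJ : J * B * J = B) :
    -⅟2 * ((1 - (2 : R) • (X * Xᵀ)) * J * B * J * (1 - (2 : R) • (X * Xᵀ)) * B).trace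
      = 2 * (Xᵀ * (B * B) * X).trace
        - 2 * (Xᵀ * B * X * (Xᵀ * B * X)).trace
        - ⅟2 * (B * B).trace := by
  have cancel_signs (S : Matrix n n R) : S * J * B * J = S * B := by
    rw [Matrix.mul_assoc S, Matrix.mul_assoc S, hJ]
  rw [cancel_signs, trace_one_sub_smul_mul_mul_self]
  linear_combination (2 * (Xᵀ * (B * B) * X).trace - 2 * (Xᵀ * B * X * (Xᵀ * B * X)).trace)
    * invOf_mul_self (2 : R)

/-- For `X` with `XᵀX = I_r`, `B = diag(b₁,…,bₙ)` and
`J = diag(-I_r, I_{n-r})`, the pull-back of the generalized Neumann potential: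
`-½ tr((I - 2XXᵀ) J B J (I - 2XXᵀ) B) = 2tr(XᵀB²X) - 2tr(XᵀBXXᵀBX) - ½tr(B²)`. -/
theorem neumann_potential_pullback (n r : ℕ) (hr : 1 ≤ r) (hnr : r ≤ n)
    (X : Matrix (Fin n) (Fin r) ℝ) (hX : Xᵀ * X = 1)
    (b : Fin n → ℝ) (B : Matrix (Fin n) (Fin n) ℝ) (hB : B = diagonal b)
    (J : Matrix (Fin n) (Fin n) ℝ)
    (hJ : J = diagonal (fun i : Fin n => if (i : ℕ) < r then (-1 : ℝ) else 1)) :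
    -(1 / 2) *
        ((1 - (2 : ℝ) • (X * Xᵀ)) * J * B * J * (1 - (2 : ℝ) • (X * Xᵀ)) * B).trace
      = 2 * (Xᵀ * (B * B) * X).trace
        - 2 * (Xᵀ * B * X * (Xᵀ * B * X)).trace
        - (1 / 2) * (B * B).trace := by
  subst hB hJ
  simpa only [invOf_eq_inv, one_div] using neumann_potential_pullback_general X
    (diagonal_conj_diagonal_of_mul_self_eq_one (by intro i; split_ifs <;> norm_num) b)
end
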